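/- Let n ≥ 7, f ∈ C¹(ℝ), and let u be a W^{3,1}_loc(ℝⁿ) stable solution of div(∇u/√(1+|∇u|²)) = −f(u) in ℝⁿ which is radially symmetric with respect to the origin. If either |∇u(x)| = o(|x|^{−n/2+√(n−1)+1}) as |x| → +∞, or |∇u(x)|^{−1} = o(|x|^{−n+2√(n−1)+2}) as |x| → +∞, then u is constant. -/

import Mathlib

open MeasureTheory Metric Real Filter Asymptotics Bornology
open scoped RealInnerProductSpace Topology

noncomputable section

/-- Euclidean space `ℝⁿ`. -/
abbrev Euc (n : ℕ) := EuclideanSpace ℝ (Fin n)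

/-- `φ` is an admissible test function on `Ω`: smooth with compact support contained in `Ω`
(i.e. `φ ∈ C_c^∞(Ω)`). -/
def IsTestFun {n : ℕ} (Ω : Set (Euc n)) (φ : Euc n → ℝ) : Prop :=
  ContDiff ℝ (⊤ : ℕ∞) φ ∧ HasCompactSupport φ ∧ tsupport φ ⊆ Ω

/-- `u` is a weak solution of the mean curvature equation
`div(∇u/√(1+|∇u|²)) = -f(u)` in `Ω`:  `u ∈ W^{1,1}_loc(Ω)`, `f(u) ∈ L¹_loc(Ω)` and
`∫_Ω ∇u·∇φ/√(1+|∇u|²) = ∫_Ω f(u) φ` for every `φ ∈ C_c^∞(Ω)`. -/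
def IsWeakSolution {n : ℕ} (Ω : Set (Euc n)) (f : ℝ → ℝ) (u : Euc n → ℝ) : Prop :=
  LocallyIntegrableOn u Ω ∧
  LocallyIntegrableOn (fun x => ‖gradient u x‖) Ω ∧
  LocallyIntegrableOn (fun x => f (u x)) Ω ∧
  ∀ φ : Euc n → ℝ, IsTestFun Ω φ →
    ∫ x in Ω, ⟪gradient u x, gradient φ x⟫ / Real.sqrt (1 + ‖gradient u x‖ ^ 2)
      = ∫ x in Ω, f (u x) * φ x

/-- `u` is a stable solution of `div(∇u/√(1+|∇u|²)) = -f(u)` in `Ω`: it is a weak solution,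
`f'(u) ∈ L¹_loc(Ω)` and the second variation of the energy at `u` is nonnegative:
`∫_Ω f'(u) ξ² ≤ ∫_Ω (|∇ξ|²/√(1+|∇u|²) - (∇u·∇ξ)²/(1+|∇u|²)^{3/2})` for all `ξ ∈ C_c^∞(Ω)`. -/
def IsStableSolution {n : ℕ} (Ω : Set (Euc n)) (f : ℝ → ℝ) (u : Euc n → ℝ) : Prop :=
  IsWeakSolution Ω f u ∧
  LocallyIntegrableOn (fun x => deriv f (u x)) Ω ∧
  ∀ ξ : Euc n → ℝ, IsTestFun Ω ξ →
    ∫ x in Ω, deriv f (u x) * ξ x ^ 2 ≤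
      ∫ x in Ω, (‖gradient ξ x‖ ^ 2 / Real.sqrt (1 + ‖gradient u x‖ ^ 2)
        - ⟪gradient u x, gradient ξ x⟫ ^ 2 / (1 + ‖gradient u x‖ ^ 2) ^ ((3:ℝ)/2))

/-- A vector field `g` belongs to the Morrey space `M^p(Ω)`: there is `K > 0` with
`∫_{B_ρ(x₀) ∩ Ω} |g| ≤ K ρ^{n(1-1/p)}` for all `x₀ ∈ Ω` and `0 < ρ ≤ diam Ω`. -/
def MemMorrey {n : ℕ} (Ω : Set (Euc n)) (p : ℝ) (g : Euc n → Euc n) : Prop :=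
  ∃ K > (0:ℝ), ∀ x₀ ∈ Ω, ∀ ρ : ℝ, 0 < ρ → ρ ≤ Metric.diam Ω →
    ∫ x in Metric.ball x₀ ρ ∩ Ω, ‖g x‖ ≤ K * ρ ^ ((n : ℝ) * (1 - 1 / p))

/-!
In the variable `t = log ‖x‖` a radial solution becomes a function `U`, with radial derivative
`V = e⁻ᵗ U'`. Let `κ = (1 + V²)^(-3/2)`. Testing the radial equation differentiated in `r` against
`V η²`, and stability against `V η`, makes all terms containing `f` or `V'` cancel and leaves

`0 ≤ ∫ e^((n-2)t) (V² κ η'² - (n-1) (V² / √(1 + V²)) η²)`.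

Since `V² / √(1 + V²) = V² κ + V⁴ κ`, the Hardy weight `η = e^(-st) ψ` with `s² = n - 1` absorbs the
`V² κ` part of the potential and turns this into

`0 ≤ ∫ (B (ψ'² - 2sψψ') - (n-1) e^((n-2-2s)t) V⁴ κ ψ²)`, where `B = e^((n-2-2s)t) V² κ`.

At `t = -∞`, `B → 0` because `∇u` vanishes to first order at the origin. At `t = +∞`, `B → 0` is
what the growth hypothesis says, in view of `V² κ ≤ min (V², |V|⁻¹)`. Letting `ψ` exhaust the line
gives `V = 0`.
-/

/-- `h` is the profile of the radial function `F` in the logarithmic variable `t = log ‖x‖`.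
Nothing is required at the origin, where `Real.log` takes a junk value. -/
def HasLogProfile {E : Type*} [NormedAddCommGroup E] (F : E → ℝ) (h : ℝ → ℝ) : Prop :=
  ∀ x ≠ 0, F x = h (log ‖x‖)

lemma integral_Ioi_eq_integral_exp_mul (h : ℝ → ℝ) :
    ∫ r in Set.Ioi 0, h r = ∫ t, exp t * h (exp t) := by
  simpa only [Set.image_univ, range_exp, abs_exp, smul_eq_mul, setIntegral_univ] using
    integral_image_eq_integral_abs_deriv_smul MeasurableSet.univ
      (fun t _ => (hasDerivAt_exp t).hasDerivWithinAt) exp_injective.injOn h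

section Integral

variable {E : Type*} [NormedAddCommGroup E] [NormedSpace ℝ E] [FiniteDimensional ℝ E]
  [Nontrivial E] [MeasurableSpace E] [BorelSpace E] (μ : Measure E) [μ.IsAddHaarMeasure]
  {F G : E → ℝ} {h k : ℝ → ℝ}

lemma HasLogProfile.integral_eq (hF : HasLogProfile F h) :
    ∫ x, F x ∂μ = (Module.finrank ℝ E * μ.real (ball 0 1)) *
      ∫ t, exp (Module.finrank ℝ E * t) * h t := by
  have hae : F =ᵐ[μ] fun x => h (log ‖x‖) := by
    filter_upwards [Measure.ae_ne μ 0] with x hx using hF x hx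
  have hdim : ((Module.finrank ℝ E - 1 : ℕ) : ℝ) = Module.finrank ℝ E - 1 :=
    Nat.cast_pred Module.finrank_pos
  rw [integral_congr_ae hae, integral_fun_norm_addHaar μ fun r => h (log r),
    integral_Ioi_eq_integral_exp_mul, nsmul_eq_mul, smul_eq_mul, ← mul_assoc]
  congr 2 with t
  rw [smul_eq_mul, log_exp, ← exp_nat_mul, ← mul_assoc, ← exp_add, hdim]
  ring_nf

lemma HasLogProfile.integral_le_integral_iff (hF : HasLogProfile F h) (hG : HasLogProfile G k) :
    ∫ x, F x ∂μ ≤ ∫ x, G x ∂μ ↔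
      ∫ t, exp (Module.finrank ℝ E * t) * h t ≤ ∫ t, exp (Module.finrank ℝ E * t) * k t := by
  have hdim : (0 : ℝ) < Module.finrank ℝ E := Nat.cast_pos.2 Module.finrank_pos
  have hball : 0 < μ.real (ball 0 1) :=
    ENNReal.toReal_pos (measure_ball_pos μ 0 one_pos).ne' measure_ball_lt_top.ne
  rw [hF.integral_eq μ, hG.integral_eq μ]
  exact mul_le_mul_iff_right₀ (mul_pos hdim hball)

end Integral

/-- The radial derivative of the function with logarithmic profile `h`: since `t = log r`, it is
`dh/dr = e⁻ᵗ h'(t)`. -/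
def radialSlope (h : ℝ → ℝ) (t : ℝ) : ℝ := exp (-t) * deriv h t

section Gradient

variable {E : Type*} [NormedAddCommGroup E] [InnerProductSpace ℝ E] [CompleteSpace E]
  {F G : E → ℝ} {h k : ℝ → ℝ}

lemma HasLogProfile.gradient_eq (hF : HasLogProfile F h) (hh : Differentiable ℝ h) {x : E}
    (hx : x ≠ 0) : gradient F x = radialSlope h (log ‖x‖) • ‖x‖⁻¹ • x := by
  have hlog : HasFDerivAt (fun y : E => log ‖y‖) ((‖x‖ ^ 2)⁻¹ • innerSL ℝ x) x := by
    have hsq := ((hasStrictFDerivAt_norm_sq x).hasFDerivAt.log (by positivity)).const_mul 2⁻¹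
    refine (hsq.congr_fderiv ?_).congr_of_eventuallyEq (.of_forall fun y => by simp)
    ext y
    simp only [_root_.smul_apply, innerSL_apply_apply, smul_eq_mul, nsmul_eq_mul]
    push_cast
    ring
  have hcomp := ((hh _).hasDerivAt.comp_hasFDerivAt x hlog).congr_of_eventuallyEq
    ((eventually_ne_nhds hx).mono fun y hy => hF y hy)
  refine (hasGradientAt_iff_hasFDerivAt.2 (hcomp.congr_fderiv ?_)).gradient
  ext y
  simp only [_root_.smul_apply, innerSL_apply_apply, smul_eq_mul, radialSlope, exp_neg,
    exp_log (norm_pos_iff.2 hx), InnerProductSpace.toDual_apply_apply, real_inner_smul_left]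
  ring

lemma HasLogProfile.inner_gradient (hF : HasLogProfile F h) (hG : HasLogProfile G k)
    (hh : Differentiable ℝ h) (hk : Differentiable ℝ k) :
    HasLogProfile (fun x => ⟪gradient F x, gradient G x⟫)
      fun t => radialSlope h t * radialSlope k t := by
  intro x hx
  beta_reduce
  have hunit : ‖‖x‖⁻¹ • x‖ = 1 := norm_smul_inv_norm (𝕜 := ℝ) hx
  rw [hF.gradient_eq hh hx, hG.gradient_eq hk hx, real_inner_smul_left, real_inner_smul_right,
    real_inner_self_eq_norm_sq, hunit]
  ring

lemma HasLogProfile.norm_gradient (hF : HasLogProfile F h) (hh : Differentiable ℝ h) :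
    HasLogProfile (fun x => ‖gradient F x‖) fun t => |radialSlope h t| := by
  intro x hx
  beta_reduce
  have hunit : ‖‖x‖⁻¹ • x‖ = 1 := norm_smul_inv_norm (𝕜 := ℝ) hx
  rw [hF.gradient_eq hh hx, norm_smul, hunit, mul_one, norm_eq_abs]

end Gradient

/-- The radial function `x ↦ ψ (log ‖x‖)`, set to zero at the origin. -/
def logLift {E : Type*} [NormedAddCommGroup E] (ψ : ℝ → ℝ) : E → ℝ :=
  Set.indicator {0}ᶜ fun x => ψ (log ‖x‖)

lemma hasLogProfile_logLift {E : Type*} [NormedAddCommGroup E] (ψ : ℝ → ℝ) :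
    HasLogProfile (logLift ψ : E → ℝ) ψ :=
  fun _ hx => Set.indicator_of_mem hx _

lemma logLift_eventuallyEq_zero {E : Type*} [NormedAddCommGroup E] {ψ : ℝ → ℝ}
    (hψ : HasCompactSupport ψ) : (logLift ψ : E → ℝ) =ᶠ[𝓝 0] 0 := by
  rw [hasCompactSupport_iff_eventuallyEq, coclosedCompact_eq_cocompact] at hψ
  have hpunctured : ∀ᶠ x : E in 𝓝[≠] 0, ψ (log ‖x‖) = 0 :=
    (tendsto_log_nhdsGT_zero.comp tendsto_norm_nhdsNE_zero).eventually (atBot_le_cocompact hψ)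
  filter_upwards [eventually_nhdsWithin_iff.1 hpunctured] with x hx
  by_cases hx0 : x = 0
  · simp [logLift, hx0]
  · exact (hasLogProfile_logLift ψ x hx0).trans (hx hx0)

lemma hasCompactSupport_logLift {E : Type*} [NormedAddCommGroup E] [ProperSpace E] {ψ : ℝ → ℝ}
    (hψ : HasCompactSupport ψ) : HasCompactSupport (logLift ψ : E → ℝ) := by
  rw [hasCompactSupport_iff_eventuallyEq, coclosedCompact_eq_cocompact] at hψ ⊢
  rw [← cobounded_eq_cocompact]
  filter_upwards [eventually_ne_cobounded (0 : E),
    (tendsto_log_atTop.comp tendsto_norm_cobounded_atTop).eventually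
      (atTop_le_cocompact hψ)] with x hx0 hx
  exact (hasLogProfile_logLift ψ x hx0).trans hx

lemma contDiff_logLift {E : Type*} [NormedAddCommGroup E] [InnerProductSpace ℝ E] {ψ : ℝ → ℝ}
    {k : ℕ∞} (hψ : ContDiff ℝ k ψ) (hψc : HasCompactSupport ψ) :
    ContDiff ℝ k (logLift ψ : E → ℝ) := by
  refine contDiff_iff_contDiffAt.2 fun x => ?_
  obtain rfl | hx := eq_or_ne x 0
  · exact contDiffAt_const.congr_of_eventuallyEq (logLift_eventuallyEq_zero hψc)
  · have hcomp : ContDiffAt ℝ k (fun y : E => ψ (log ‖y‖)) x :=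
      hψ.contDiffAt.comp x ((contDiffAt_norm ℝ hx).log (norm_ne_zero_iff.2 hx))
    exact hcomp.congr_of_eventuallyEq
      ((eventually_ne_nhds hx).mono (hasLogProfile_logLift ψ))

lemma isTestFun_logLift {n : ℕ} {ψ : ℝ → ℝ} (hψ : ContDiff ℝ (⊤ : ℕ∞) ψ)
    (hψc : HasCompactSupport ψ) : IsTestFun Set.univ (logLift ψ : Euc n → ℝ) :=
  ⟨contDiff_logLift hψ hψc, hasCompactSupport_logLift hψc, Set.subset_univ _⟩

/-- The flux density `p / √(1 + p²)` of the mean curvature operator in one variable. -/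
def flux (p : ℝ) : ℝ := p / √(1 + p ^ 2)

/-- The derivative of `flux`. -/
def fluxDeriv (p : ℝ) : ℝ := (√(1 + p ^ 2) ^ 3)⁻¹

lemma hasDerivAt_flux (p : ℝ) : HasDerivAt flux (fluxDeriv p) p := by
  have hpos : 0 < 1 + p ^ 2 := by positivity
  have hsq : √(1 + p ^ 2) ^ 2 = 1 + p ^ 2 := sq_sqrt hpos.le
  have hsqrt : HasDerivAt (fun q => √(1 + q ^ 2)) (2 * p / (2 * √(1 + p ^ 2))) p := by
    simpa using ((hasDerivAt_pow 2 p).const_add 1).sqrt hpos.ne'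
  refine ((hasDerivAt_id' p).div hsqrt (sqrt_pos.2 hpos).ne').congr_deriv ?_
  unfold fluxDeriv
  field_simp
  rw [hsq]
  ring

lemma contDiff_flux : ContDiff ℝ (⊤ : ℕ∞) flux :=
  contDiff_id.div ((contDiff_const.add (contDiff_id.pow 2)).sqrt fun p => by positivity)
    fun p => by positivity

lemma continuous_fluxDeriv : Continuous fluxDeriv := by
  unfold fluxDeriv
  fun_prop (disch := intro; positivity)

lemma fluxDeriv_pos (p : ℝ) : 0 < fluxDeriv p := by
  unfold fluxDeriv; positivity

lemma mul_flux_sub_sq_mul_fluxDeriv (p : ℝ) :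
    p * flux p - p ^ 2 * fluxDeriv p = p ^ 4 * fluxDeriv p := by
  have hsq : √(1 + p ^ 2) ^ 2 = 1 + p ^ 2 := sq_sqrt (by positivity)
  have : 0 < √(1 + p ^ 2) := by positivity
  unfold flux fluxDeriv
  field_simp
  rw [hsq]
  ring

lemma fluxDeriv_eq_second_variation (p : ℝ) :
    1 / √(1 + p ^ 2) - p ^ 2 / (1 + p ^ 2) ^ ((3 : ℝ) / 2) = fluxDeriv p := by
  have hpow : (1 + p ^ 2) ^ ((3 : ℝ) / 2) = √(1 + p ^ 2) ^ 3 := by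
    rw [rpow_div_two_eq_sqrt 3 (by positivity)]
    norm_cast
  have hsq : √(1 + p ^ 2) ^ 2 = 1 + p ^ 2 := sq_sqrt (by positivity)
  have : 0 < √(1 + p ^ 2) := by positivity
  unfold fluxDeriv
  rw [hpow]
  field_simp
  rw [hsq]
  ring

lemma sq_mul_fluxDeriv_le_sq (p : ℝ) : p ^ 2 * fluxDeriv p ≤ p ^ 2 := by
  refine mul_le_of_le_one_right (sq_nonneg p) (inv_le_one_of_one_le₀ (one_le_pow₀ ?_))
  exact one_le_sqrt.2 (by nlinarith [sq_nonneg p])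

lemma sq_mul_fluxDeriv_le_inv_abs (p : ℝ) : p ^ 2 * fluxDeriv p ≤ |p|⁻¹ := by
  obtain rfl | hp := eq_or_ne p 0
  · simp
  have habs : |p| ≤ √(1 + p ^ 2) := abs_le_sqrt (by linarith)
  calc p ^ 2 * fluxDeriv p ≤ |p| ^ 2 * (|p| ^ 3)⁻¹ := by
        rw [sq_abs]; unfold fluxDeriv; gcongr
    _ = |p|⁻¹ := by field_simp

/-- The weak form of the mean curvature equation in dimension `d` for a radial function with
logarithmic profile `U`. Only the weights depend on `d`, which may be any real number. -/
def IsLogWeakSolution (d : ℝ) (f U : ℝ → ℝ) : Prop :=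
  ∀ ψ : ℝ → ℝ, ContDiff ℝ (⊤ : ℕ∞) ψ → HasCompactSupport ψ →
    ∫ t, exp ((d - 1) * t) * flux (radialSlope U t) * deriv ψ t =
      ∫ t, exp (d * t) * f (U t) * ψ t

/-- Nonnegativity of the second variation on radial test functions, in dimension `d`, for a radial
function with logarithmic profile `U`. -/
def IsLogStable (d : ℝ) (f U : ℝ → ℝ) : Prop :=
  ∀ ψ : ℝ → ℝ, ContDiff ℝ (⊤ : ℕ∞) ψ → HasCompactSupport ψ →
    ∫ t, exp (d * t) * deriv f (U t) * ψ t ^ 2 ≤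
      ∫ t, exp ((d - 2) * t) * fluxDeriv (radialSlope U t) * deriv ψ t ^ 2

section LogCoordinates

variable {n : ℕ} [NeZero n] {f : ℝ → ℝ} {u : Euc n → ℝ} {U : ℝ → ℝ}

lemma IsWeakSolution.isLogWeakSolution (hsol : IsWeakSolution Set.univ f u)
    (hu : HasLogProfile u U) (hU : Differentiable ℝ U) : IsLogWeakSolution n f U := by
  intro ψ hψ hψc
  have hlift := hasLogProfile_logLift (E := Euc n) ψ
  have hleft : HasLogProfile (fun x : Euc n => ⟪gradient u x, gradient (logLift ψ) x⟫ /
      √(1 + ‖gradient u x‖ ^ 2)) fun t => exp (-t) * flux (radialSlope U t) * deriv ψ t := by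
    intro x hx
    have hinner := hu.inner_gradient hlift hU (hψ.differentiable (by simp)) x hx
    have hnorm := hu.norm_gradient hU x hx
    beta_reduce at hinner hnorm ⊢
    rw [hinner, hnorm, sq_abs, flux, radialSlope, radialSlope]
    ring
  have hright : HasLogProfile (fun x : Euc n => f (u x) * logLift ψ x)
      fun t => f (U t) * ψ t := fun x hx => by
    beta_reduce
    rw [hu x hx, hlift x hx]
  have hweak := hsol.2.2.2 _ (isTestFun_logLift hψ hψc)
  simp only [setIntegral_univ] at hweak
  have hlog := le_antisymm ((hleft.integral_le_integral_iff volume hright).1 hweak.le)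
    ((hright.integral_le_integral_iff volume hleft).1 hweak.ge)
  simp only [finrank_euclideanSpace_fin, ← mul_assoc, ← exp_add] at hlog
  convert hlog using 6
  ring

lemma IsStableSolution.isLogStable (hsol : IsStableSolution Set.univ f u)
    (hu : HasLogProfile u U) (hU : Differentiable ℝ U) : IsLogStable n f U := by
  intro ψ hψ hψc
  have hlift := hasLogProfile_logLift (E := Euc n) ψ
  have hψd : Differentiable ℝ ψ := hψ.differentiable (by simp)
  have hleft : HasLogProfile (fun x : Euc n => deriv f (u x) * logLift ψ x ^ 2)
      fun t => deriv f (U t) * ψ t ^ 2 := fun x hx => by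
    beta_reduce
    rw [hu x hx, hlift x hx]
  have hright : HasLogProfile (fun x : Euc n =>
      ‖gradient (logLift ψ) x‖ ^ 2 / √(1 + ‖gradient u x‖ ^ 2) -
        ⟪gradient u x, gradient (logLift ψ) x⟫ ^ 2 / (1 + ‖gradient u x‖ ^ 2) ^ ((3 : ℝ) / 2))
      fun t => exp (-t) ^ 2 * fluxDeriv (radialSlope U t) * deriv ψ t ^ 2 := by
    intro x hx
    have hinner := hu.inner_gradient hlift hU hψd x hx
    have hnorm := hu.norm_gradient hU x hx
    have hnormψ := hlift.norm_gradient hψd x hx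
    beta_reduce at hinner hnorm hnormψ ⊢
    rw [hinner, hnorm, hnormψ, sq_abs, sq_abs]
    simp only [← fluxDeriv_eq_second_variation, radialSlope]
    ring
  have hstab := hsol.2.2 _ (isTestFun_logLift hψ hψc)
  simp only [setIntegral_univ] at hstab
  have hlog := (hleft.integral_le_integral_iff volume hright).1 hstab
  simp only [finrank_euclideanSpace_fin, ← mul_assoc, ← exp_nat_mul, ← exp_add] at hlog
  convert hlog using 6
  push_cast
  ring

end LogCoordinates

lemma hasCompactSupport_sq {X : Type*} [TopologicalSpace X] {b : X → ℝ}
    (hb : HasCompactSupport b) : HasCompactSupport fun x => b x ^ 2 :=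
  hb.comp_left (g := fun y => y ^ 2) (by simp)

lemma integral_mul_deriv_eq_neg_of_hasCompactSupport {a b : ℝ → ℝ} (ha : ContDiff ℝ 1 a)
    (hb : ContDiff ℝ 1 b) (hbc : HasCompactSupport b) :
    ∫ t, a t * deriv b t = -∫ t, deriv a t * b t :=
  integral_mul_deriv_eq_deriv_mul_of_integrable
    (fun t _ => (ha.differentiable_one t).hasDerivAt)
    (fun t _ => (hb.differentiable_one t).hasDerivAt)
    ((ha.continuous.mul hb.continuous_deriv_one).integrable_of_hasCompactSupport hbc.deriv.mul_left)
    ((ha.continuous_deriv_one.mul hb.continuous).integrable_of_hasCompactSupport hbc.mul_left)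
    ((ha.continuous.mul hb.continuous).integrable_of_hasCompactSupport hbc.mul_left)

lemma integral_deriv_eq_zero_of_hasCompactSupport {b : ℝ → ℝ} (hb : ContDiff ℝ 1 b)
    (hbc : HasCompactSupport b) : ∫ t, deriv b t = 0 := by
  simpa using integral_mul_deriv_eq_neg_of_hasCompactSupport contDiff_const (a := fun _ => 1) hb hbc

lemma contDiff_exp_mul (c : ℝ) {k : WithTop ℕ∞} : ContDiff ℝ k fun t => exp (c * t) :=
  (contDiff_const.mul contDiff_id).exp

lemma deriv_exp_mul_mul (c : ℝ) {a : ℝ → ℝ} {t : ℝ} (ha : DifferentiableAt ℝ a t) :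
    deriv (fun t => exp (c * t) * a t) t = exp (c * t) * (c * a t + deriv a t) := by
  have hexp : HasDerivAt (fun t => exp (c * t)) (exp (c * t) * c) t := by
    simpa using ((hasDerivAt_id t).const_mul c).exp
  refine (hexp.mul ha.hasDerivAt).deriv.trans ?_
  ring

section LinearisedEquation

variable {d : ℝ} {F P ζ : ℝ → ℝ}

lemma integral_deriv_mul_eq_integral_mul_of_weak (hF : ContDiff ℝ 1 F) (hP : ContDiff ℝ 1 P)
    (hweak : ∀ ψ : ℝ → ℝ, ContDiff ℝ (⊤ : ℕ∞) ψ → HasCompactSupport ψ →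
      ∫ t, exp ((d - 1) * t) * P t * deriv ψ t = ∫ t, exp (d * t) * F t * ψ t)
    (hζ : ContDiff ℝ (⊤ : ℕ∞) ζ) (hζc : HasCompactSupport ζ) :
    ∫ t, exp ((d - 1) * t) * deriv F t * ζ t =
      ∫ t, exp ((d - 2) * t) * (((d - 1) * P t + deriv P t) * ((d - 1) * ζ t + deriv ζ t)) := by
  have hexp_pred (t : ℝ) : exp ((d - 2) * t) = exp ((d - 1) * t) * exp (-t) := by
    rw [← exp_add]; ring_nf
  have hexp_succ (t : ℝ) : exp (d * t) * exp (-t) = exp ((d - 1) * t) := by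
    rw [← exp_add]; ring_nf
  have hζ1 : ContDiff ℝ 1 ζ := hζ.of_le (by norm_cast)
  -- With this test function, `exp (d t) ψ` is the derivative of `exp ((d - 1) t) ζ`.
  let ψ : ℝ → ℝ := fun t => exp (-t) * ((d - 1) * ζ t + deriv ζ t)
  have hψ : ContDiff ℝ (⊤ : ℕ∞) ψ :=
    contDiff_neg.exp.mul ((contDiff_const.mul hζ).add hζ.deriv')
  have hψc : HasCompactSupport ψ := (hζc.mul_left.add hζc.deriv).mul_left
  calc ∫ t, exp ((d - 1) * t) * deriv F t * ζ t
      = ∫ t, deriv F t * (exp ((d - 1) * t) * ζ t) := by simp only [mul_left_comm, mul_assoc]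
    _ = -∫ t, F t * deriv (fun t => exp ((d - 1) * t) * ζ t) t := by
        rw [integral_mul_deriv_eq_neg_of_hasCompactSupport hF ((contDiff_exp_mul _).mul hζ1)
          hζc.mul_left, neg_neg]
    _ = -∫ t, exp (d * t) * F t * ψ t := by
        congr 2 with t
        rw [deriv_exp_mul_mul _ (hζ1.differentiable_one t), ← hexp_succ]
        ring
    _ = -∫ t, exp ((d - 1) * t) * P t * deriv ψ t := by rw [hweak ψ hψ hψc]
    _ = ∫ t, deriv (fun t => exp ((d - 1) * t) * P t) t * ψ t := by
        rw [integral_mul_deriv_eq_neg_of_hasCompactSupport ((contDiff_exp_mul _).mul hP)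
          (hψ.of_le (by norm_cast)) hψc, neg_neg]
    _ = _ := by
        congr 1 with t
        rw [deriv_exp_mul_mul _ (hP.differentiable_one t), hexp_pred]
        ring

lemma integral_deriv_mul_eq_of_weak_of_smooth (hF : ContDiff ℝ 1 F) (hP : ContDiff ℝ 1 P)
    (hweak : ∀ ψ : ℝ → ℝ, ContDiff ℝ (⊤ : ℕ∞) ψ → HasCompactSupport ψ →
      ∫ t, exp ((d - 1) * t) * P t * deriv ψ t = ∫ t, exp (d * t) * F t * ψ t)
    (hζ : ContDiff ℝ (⊤ : ℕ∞) ζ) (hζc : HasCompactSupport ζ) :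
    ∫ t, exp ((d - 1) * t) * deriv F t * ζ t =
      ∫ t, exp ((d - 2) * t) * ((d - 1) * P t * ζ t + deriv P t * deriv ζ t) := by
  have hζ1 : ContDiff ℝ 1 ζ := hζ.of_le (by norm_cast)
  have hPζ : ContDiff ℝ 1 fun t => exp ((d - 2) * t) * (P t * ζ t) :=
    (contDiff_exp_mul _).mul (hP.mul hζ1)
  have hPζc : HasCompactSupport fun t => exp ((d - 2) * t) * (P t * ζ t) :=
    hζc.mul_left.mul_left
  have hint : Integrable fun t =>
      exp ((d - 2) * t) * ((d - 1) * P t * ζ t + deriv P t * deriv ζ t) := by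
    refine Continuous.integrable_of_hasCompactSupport ?_
      (hζc.mul_left.add hζc.deriv.mul_left).mul_left
    have := hP.continuous_deriv_one
    have := hζ1.continuous_deriv_one
    have := hP.continuous
    have := hζ1.continuous
    fun_prop
  have hint' : Integrable fun t => (d - 1) * deriv (fun t => exp ((d - 2) * t) * (P t * ζ t)) t :=
    (hPζ.continuous_deriv_one.integrable_of_hasCompactSupport hPζc.deriv).const_mul (d - 1)
  calc ∫ t, exp ((d - 1) * t) * deriv F t * ζ t
      = ∫ t, exp ((d - 2) * t) * (((d - 1) * P t + deriv P t) * ((d - 1) * ζ t + deriv ζ t)) :=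
        integral_deriv_mul_eq_integral_mul_of_weak hF hP hweak hζ hζc
    _ = ∫ t, (exp ((d - 2) * t) * ((d - 1) * P t * ζ t + deriv P t * deriv ζ t) +
          (d - 1) * deriv (fun t => exp ((d - 2) * t) * (P t * ζ t)) t) := by
        congr 1 with t
        have hPd := hP.differentiable_one t
        have hζd := hζ1.differentiable_one t
        rw [deriv_exp_mul_mul _ (hPd.fun_mul hζd), deriv_fun_mul hPd hζd]
        ring
    _ = _ := by
        rw [integral_add hint hint', integral_const_mul,
          integral_deriv_eq_zero_of_hasCompactSupport hPζ hPζc, mul_zero, add_zero]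

end LinearisedEquation

section Mollification

open scoped Convolution ContDiff
open ContinuousLinearMap (lsmul)

lemma tendstoUniformly_normed_convolution {G E ι : Type*} [NormedAddCommGroup G]
    [NormedSpace ℝ G] [FiniteDimensional ℝ G] [MeasurableSpace G] [BorelSpace G] (μ : Measure G)
    [μ.IsAddHaarMeasure] [NormedAddCommGroup E] [NormedSpace ℝ E] [CompleteSpace E]
    {l : Filter ι} {b : ι → ContDiffBump (0 : G)} (hb : Tendsto (fun i => (b i).rOut) l (𝓝 0))
    {g : G → E} (hg : UniformContinuous g) :
    TendstoUniformly (fun i => ((b i).normed μ ⋆[lsmul ℝ ℝ, μ] g)) g l := by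
  rw [Metric.tendstoUniformly_iff]
  intro ε hε
  obtain ⟨δ, hδ, hgδ⟩ := Metric.uniformContinuous_iff.1 hg (ε / 2) (half_pos hε)
  filter_upwards [hb.eventually_lt_const hδ] with i hi x
  rw [dist_comm]
  refine (ContDiffBump.dist_normed_convolution_le hg.continuous.aestronglyMeasurable
    fun y hy => ?_).trans_lt (half_lt_self hε)
  exact (hgδ ((mem_ball.1 hy).trans hi)).le

lemma exists_smooth_approx {φ : ℝ → ℝ} (hφ : ContDiff ℝ 1 φ) (hφc : HasCompactSupport φ) :
    ∃ (ψ : ℕ → ℝ → ℝ) (K : Set ℝ), IsCompact K ∧ (∀ j, ContDiff ℝ ∞ (ψ j)) ∧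
      (∀ j, tsupport (ψ j) ⊆ K) ∧ TendstoUniformly ψ φ atTop ∧
      TendstoUniformly (fun j => deriv (ψ j)) (deriv φ) atTop := by
  let b (j : ℕ) : ContDiffBump (0 : ℝ) :=
    ⟨1 / (j + 2), 1 / (j + 1), by positivity, by gcongr; norm_num⟩
  have hb : Tendsto (fun j => (b j).rOut) atTop (𝓝 0) := tendsto_one_div_add_atTop_nhds_zero_nat
  have hderiv (j : ℕ) : deriv ((b j).normed volume ⋆[lsmul ℝ ℝ] φ) =
      (b j).normed volume ⋆[lsmul ℝ ℝ] deriv φ :=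
    funext fun t => (hφc.hasDerivAt_convolution_right _
      (b j).continuous_normed.locallyIntegrable hφ t).deriv
  refine ⟨fun j => (b j).normed volume ⋆[lsmul ℝ ℝ] φ, cthickening 1 (tsupport φ),
    hφc.isCompact.cthickening, fun j => ?_, fun j => ?_, ?_, ?_⟩
  · exact (b j).hasCompactSupport_normed.contDiff_convolution_left _ (b j).contDiff_normed
      hφ.continuous.locallyIntegrable
  · refine closure_minimal ?_ isClosed_cthickening
    intro t ht
    obtain ⟨a, ha, c, hc, rfl⟩ := support_convolution_subset _ ht
    have hrOut : (b j).rOut ≤ 1 := div_le_one_of_le₀ (by linarith [j.cast_nonneg (α := ℝ)])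
      (by positivity)
    rw [(b j).support_normed_eq, mem_ball_zero_iff] at ha
    refine mem_cthickening_of_dist_le _ c _ _ (subset_tsupport _ hc) ?_
    simpa [dist_eq_norm] using ha.le.trans hrOut
  · exact tendstoUniformly_normed_convolution volume hb
      (hφc.uniformContinuous_of_continuous hφ.continuous)
  · simp only [hderiv]
    exact tendstoUniformly_normed_convolution volume hb
      (hφc.deriv.uniformContinuous_of_continuous hφ.continuous_deriv_one)

end Mollification

lemma tendsto_integral_comp_of_tendstoUniformly {α X : Type*} [TopologicalSpace α] [T2Space α]
    [SecondCountableTopology α] [MeasurableSpace α] [BorelSpace α] {μ : Measure α}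
    [IsFiniteMeasureOnCompacts μ] [NormedAddCommGroup X] [ProperSpace X] {Ψ : ℕ → α → X}
    {Φ : α → X} {K : Set α} (hK : IsCompact K) (hΨ : TendstoUniformly Ψ Φ atTop)
    (hΨc : ∀ j, Continuous (Ψ j)) (hΨK : ∀ j, ∀ t ∉ K, Ψ j t = 0)
    {L : α → X → ℝ} (hL : Continuous fun p : α × X => L p.1 p.2) (hL0 : ∀ t, L t 0 = 0) :
    Tendsto (fun j => ∫ t, L t (Ψ j t) ∂μ) atTop (𝓝 (∫ t, L t (Φ t) ∂μ)) := by
  have hΦ : Continuous Φ := hΨ.continuous (.of_forall hΨc)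
  obtain ⟨C, hC⟩ := hK.exists_bound_of_continuousOn hΦ.continuousOn
  obtain ⟨M, hM⟩ := (hK.prod (isCompact_closedBall (0 : X) (C + 1))).exists_bound_of_continuousOn
    hL.continuousOn
  refine tendsto_integral_filter_of_dominated_convergence (K.indicator fun _ => M)
    (.of_forall fun j => (hL.comp (continuous_id.prodMk (hΨc j))).aestronglyMeasurable) ?_
    ((integrable_indicator_iff hK.measurableSet).2 (integrableOn_const hK.measure_lt_top.ne))
    (.of_forall fun t => (hL.tendsto (t, Φ t)).comp
      (tendsto_const_nhds.prodMk_nhds (hΨ.tendsto_at t)))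
  filter_upwards [Metric.tendstoUniformly_iff.1 hΨ 1 one_pos] with j hj
  refine .of_forall fun t => ?_
  by_cases ht : t ∈ K
  · rw [Set.indicator_of_mem ht]
    refine hM (t, Ψ j t) ⟨ht, mem_closedBall_zero_iff.2 ?_⟩
    have := norm_le_norm_add_norm_sub (Φ t) (Ψ j t)
    have := hj t
    rw [dist_eq_norm] at this
    linarith [hC t ht]
  · simp [ht, hΨK j t ht, hL0]

lemma exists_smooth_seq_tendsto_integral {φ : ℝ → ℝ} (hφ : ContDiff ℝ 1 φ)
    (hφc : HasCompactSupport φ) :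
    ∃ ψ : ℕ → ℝ → ℝ, (∀ j, ContDiff ℝ (⊤ : ℕ∞) (ψ j)) ∧ (∀ j, HasCompactSupport (ψ j)) ∧
      ∀ L : ℝ → ℝ × ℝ → ℝ, Continuous (fun p : ℝ × ℝ × ℝ => L p.1 p.2) → (∀ t, L t 0 = 0) →
        Tendsto (fun j => ∫ t, L t (ψ j t, deriv (ψ j) t)) atTop
          (𝓝 (∫ t, L t (φ t, deriv φ t))) := by
  obtain ⟨ψ, K, hK, hψ, hψK, hlim, hlim'⟩ := exists_smooth_approx hφ hφc
  refine ⟨ψ, hψ, fun j => hK.of_isClosed_subset (isClosed_tsupport _) (hψK j),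
    fun L hL hL0 => ?_⟩
  have hpair : TendstoUniformly (fun j t => (ψ j t, deriv (ψ j) t)) (fun t => (φ t, deriv φ t))
      atTop := fun v hv => ((hlim.prodMk hlim') v hv).diag_of_prod
  refine tendsto_integral_comp_of_tendstoUniformly hK hpair (fun j => ?_) (fun j t ht => ?_) hL hL0
  · exact (hψ j).continuous.prodMk ((hψ j).continuous_deriv (by simp))
  · have ht' : t ∉ tsupport (ψ j) := fun h => ht (hψK j h)
    have hψt : ψ j t = 0 := image_eq_zero_of_notMem_tsupport ht'
    have hψt' : deriv (ψ j) t = 0 :=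
      image_eq_zero_of_notMem_tsupport fun h => ht' (tsupport_deriv_subset h)
    rw [hψt, hψt', Prod.mk_zero_zero]

lemma integral_deriv_mul_eq_of_weak {d : ℝ} {F P ζ : ℝ → ℝ} (hF : ContDiff ℝ 1 F)
    (hP : ContDiff ℝ 1 P)
    (hweak : ∀ ψ : ℝ → ℝ, ContDiff ℝ (⊤ : ℕ∞) ψ → HasCompactSupport ψ →
      ∫ t, exp ((d - 1) * t) * P t * deriv ψ t = ∫ t, exp (d * t) * F t * ψ t)
    (hζ : ContDiff ℝ 1 ζ) (hζc : HasCompactSupport ζ) :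
    ∫ t, exp ((d - 1) * t) * deriv F t * ζ t =
      ∫ t, exp ((d - 2) * t) * ((d - 1) * P t * ζ t + deriv P t * deriv ζ t) := by
  obtain ⟨ψ, hψ, hψc, hlim⟩ := exists_smooth_seq_tendsto_integral hζ hζc
  have := hF.continuous_deriv_one
  have := hP.continuous_deriv_one
  have := hP.continuous
  refine tendsto_nhds_unique
    (hlim (fun t p => exp ((d - 1) * t) * deriv F t * p.1) (by fun_prop) fun t => by simp)
    ((hlim (fun t p => exp ((d - 2) * t) * ((d - 1) * P t * p.1 + deriv P t * p.2)) (by fun_prop)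
      fun t => by simp).congr fun j => ?_)
  exact (integral_deriv_mul_eq_of_weak_of_smooth hF hP hweak (hψ j) (hψc j)).symm

lemma integral_mul_sq_le_of_forall_smooth {a b ξ : ℝ → ℝ} (ha : Continuous a) (hb : Continuous b)
    (hab : ∀ ψ : ℝ → ℝ, ContDiff ℝ (⊤ : ℕ∞) ψ → HasCompactSupport ψ →
      ∫ t, a t * ψ t ^ 2 ≤ ∫ t, b t * deriv ψ t ^ 2)
    (hξ : ContDiff ℝ 1 ξ) (hξc : HasCompactSupport ξ) :
    ∫ t, a t * ξ t ^ 2 ≤ ∫ t, b t * deriv ξ t ^ 2 := by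
  obtain ⟨ψ, hψ, hψc, hlim⟩ := exists_smooth_seq_tendsto_integral hξ hξc
  exact le_of_tendsto_of_tendsto'
    (hlim (fun t p => a t * p.1 ^ 2) (by fun_prop) fun t => by simp)
    (hlim (fun t p => b t * p.2 ^ 2) (by fun_prop) fun t => by simp)
    fun j => hab _ (hψ j) (hψc j)

lemma integral_nonneg_of_linearised_of_stable {a b q V η : ℝ → ℝ} (hb : Continuous b)
    (hq : Continuous q) (hV : ContDiff ℝ 1 V)
    (hlin : ∀ ζ : ℝ → ℝ, ContDiff ℝ 1 ζ → HasCompactSupport ζ →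
      ∫ t, a t * V t * ζ t = ∫ t, (q t * ζ t + b t * deriv V t * deriv ζ t))
    (hstab : ∀ ξ : ℝ → ℝ, ContDiff ℝ 1 ξ → HasCompactSupport ξ →
      ∫ t, a t * ξ t ^ 2 ≤ ∫ t, b t * deriv ξ t ^ 2)
    (hη : ContDiff ℝ 1 η) (hηc : HasCompactSupport η) :
    0 ≤ ∫ t, (b t * V t ^ 2 * deriv η t ^ 2 - q t * V t * η t ^ 2) := by
  have hξ : ContDiff ℝ 1 fun t => V t * η t := hV.mul hη
  have hζ : ContDiff ℝ 1 fun t => V t * η t ^ 2 := hV.mul (hη.pow 2)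
  have hξc : HasCompactSupport fun t => V t * η t := hηc.mul_left
  have hζc : HasCompactSupport fun t => V t * η t ^ 2 := (hasCompactSupport_sq hηc).mul_left
  have hleft : Integrable fun t => b t * deriv (fun t => V t * η t) t ^ 2 :=
    (hb.mul (hξ.continuous_deriv_one.pow 2)).integrable_of_hasCompactSupport
      (hasCompactSupport_sq hξc.deriv).mul_left
  have hright : Integrable fun t =>
      q t * (V t * η t ^ 2) + b t * deriv V t * deriv (fun t => V t * η t ^ 2) t :=
    Continuous.integrable_of_hasCompactSupport
      ((hq.mul hζ.continuous).add
        ((hb.mul hV.continuous_deriv_one).mul hζ.continuous_deriv_one))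
      (hζc.mul_left.add hζc.deriv.mul_left)
  have hVη := hstab _ hξ hξc
  have hVη' := hlin _ hζ hζc
  calc 0 ≤ (∫ t, b t * deriv (fun t => V t * η t) t ^ 2) -
        ∫ t, (q t * (V t * η t ^ 2) + b t * deriv V t * deriv (fun t => V t * η t ^ 2) t) := by
        rw [← hVη', sub_nonneg]
        convert hVη using 3
        ring
    _ = ∫ t, (b t * V t ^ 2 * deriv η t ^ 2 - q t * V t * η t ^ 2) := by
        rw [← integral_sub hleft hright]
        congr 1 with t
        have hVd := hV.differentiable_one t
        have hηd := hη.differentiable_one t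
        rw [deriv_fun_mul hVd hηd, deriv_fun_mul hVd (hηd.fun_pow 2), deriv_fun_pow hηd]
        ring

lemma deriv_eq_exp_mul_radialSlope (h : ℝ → ℝ) (t : ℝ) :
    deriv h t = exp t * radialSlope h t := by
  rw [radialSlope, ← mul_assoc, ← exp_add, add_neg_cancel, exp_zero, one_mul]

lemma contDiff_radialSlope {h : ℝ → ℝ} (hh : ContDiff ℝ 2 h) : ContDiff ℝ 1 (radialSlope h) :=
  contDiff_neg.exp.mul (ContDiff.deriv' (n := 1) hh)

lemma integral_nonneg_of_weak_of_stable {d : ℝ} {f U η : ℝ → ℝ} (hf : ContDiff ℝ 1 f)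
    (hU : ContDiff ℝ 2 U) (hweak : IsLogWeakSolution d f U) (hstab : IsLogStable d f U)
    (hη : ContDiff ℝ 1 η) (hηc : HasCompactSupport η) :
    0 ≤ ∫ t, exp ((d - 2) * t) *
      (radialSlope U t ^ 2 * fluxDeriv (radialSlope U t) * deriv η t ^ 2 -
        (d - 1) * (radialSlope U t * flux (radialSlope U t)) * η t ^ 2) := by
  set V := radialSlope U
  have hV : ContDiff ℝ 1 V := contDiff_radialSlope hU
  have hU1 : ContDiff ℝ 1 U := hU.of_le one_le_two
  have hP : ContDiff ℝ 1 fun t => flux (V t) := (contDiff_flux.of_le (by norm_cast)).comp hV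
  have hexp (c : ℝ) : Continuous fun t => exp (c * t) := by fun_prop
  have hb : Continuous fun t => exp ((d - 2) * t) * fluxDeriv (V t) :=
    (hexp _).mul (continuous_fluxDeriv.comp hV.continuous)
  have ha : Continuous fun t => exp (d * t) * deriv f (U t) :=
    (hexp _).mul (hf.continuous_deriv_one.comp hU.continuous)
  have hderivF (t : ℝ) : deriv (fun t => f (U t)) t = deriv f (U t) * (exp t * V t) := by
    rw [← deriv_eq_exp_mul_radialSlope]
    exact deriv_comp t (hf.differentiable_one _) (hU1.differentiable_one t)
  have hderivP (t : ℝ) : deriv (fun t => flux (V t)) t = fluxDeriv (V t) * deriv V t :=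
    ((hasDerivAt_flux (V t)).comp t (hV.differentiable_one t).hasDerivAt).deriv
  have hmain := integral_nonneg_of_linearised_of_stable
    (a := fun t => exp (d * t) * deriv f (U t))
    (q := fun t => exp ((d - 2) * t) * ((d - 1) * flux (V t))) hb
    ((hexp _).mul (continuous_const.mul hP.continuous)) hV (fun ζ hζ hζc => ?_)
    (fun ξ hξ hξc => integral_mul_sq_le_of_forall_smooth ha hb hstab hξ hξc) hη hηc
  · convert hmain using 3
    ring
  · convert integral_deriv_mul_eq_of_weak (hf.comp hU1) hP hweak hζ hζc using 3 with t t
    · rw [Function.comp_def, hderivF, show d * t = (d - 1) * t + t by ring, exp_add]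
      ring
    · rw [hderivP]
      ring

section Cutoff

variable {B E χ : ℝ → ℝ} {s : ℝ}

lemma deriv_comp_div (hχ : Differentiable ℝ χ) (N t : ℝ) :
    deriv (fun t => χ (t / N)) t = deriv χ (t / N) / N := by
  simpa [div_eq_mul_inv, Function.comp_def] using
    ((hχ (t / N)).hasDerivAt.comp t ((hasDerivAt_id t).div_const N)).deriv

lemma hasCompactSupport_comp_div (hχc : HasCompactSupport χ) {N : ℝ} (hN : N ≠ 0) :
    HasCompactSupport fun t => χ (t / N) := by
  simpa [div_eq_mul_inv, Function.comp_def] using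
    hχc.comp_homeomorph (Homeomorph.mulRight₀ N⁻¹ (inv_ne_zero hN))

lemma tendsto_integral_comp_mul_mul (hB : Continuous B) (hB0 : Tendsto B (cocompact ℝ) (𝓝 0))
    {p q : ℝ → ℝ} (hp : Continuous p) (hpc : HasCompactSupport p) (hq : Continuous q)
    (hqc : HasCompactSupport q) :
    Tendsto (fun N => ∫ τ, B (N * τ) * (p τ / N - q τ)) atTop (𝓝 0) := by
  obtain ⟨C, hC⟩ := (ZeroAtInftyContinuousMap.isBounded_range ⟨⟨B, hB⟩, hB0⟩).exists_norm_le
  have hBC (t : ℝ) : |B t| ≤ C := hC _ ⟨t, rfl⟩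
  have hlim : Tendsto (fun N => ∫ τ, B (N * τ) * (p τ / N - q τ)) atTop
      (𝓝 (∫ _ : ℝ, (0 : ℝ))) := by
    refine tendsto_integral_filter_of_dominated_convergence (fun τ => C * (|p τ| + |q τ|)) ?_ ?_
      (((hp.integrable_of_hasCompactSupport hpc).abs.add
        (hq.integrable_of_hasCompactSupport hqc).abs).const_mul C) ?_
    · exact .of_forall fun N => Continuous.aestronglyMeasurable (by fun_prop)
    · filter_upwards [eventually_ge_atTop 1] with N hN
      refine .of_forall fun τ => ?_
      have hpN : |p τ / N| ≤ |p τ| := by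
        rw [abs_div]
        exact div_le_self (abs_nonneg _) (hN.trans (le_abs_self N))
      rw [norm_mul, norm_eq_abs, norm_eq_abs]
      gcongr
      · exact (abs_nonneg (B 0)).trans (hBC 0)
      · exact hBC _
      · exact (abs_sub _ _).trans (by gcongr)
    · filter_upwards [Measure.ae_ne volume 0] with τ hτ
      have hBτ : Tendsto (fun N => B (N * τ)) atTop (𝓝 0) :=
        hB0.comp ((tendsto_cocompact_mul_right₀ hτ).mono_left atTop_le_cocompact)
      simpa using hBτ.mul ((tendsto_const_nhds.div_atTop tendsto_id).sub_const (q τ))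
  simpa only [integral_zero] using hlim

lemma tendsto_integral_cutoff (hB : Continuous B) (hB0 : Tendsto B (cocompact ℝ) (𝓝 0))
    (hχ : ContDiff ℝ 1 χ) (hχc : HasCompactSupport χ) :
    Tendsto (fun N => ∫ t, B t * (deriv (fun t => χ (t / N)) t ^ 2 -
      2 * s * χ (t / N) * deriv (fun t => χ (t / N)) t)) atTop (𝓝 0) := by
  have := hχ.continuous_deriv_one
  refine (tendsto_integral_comp_mul_mul hB hB0 (p := fun τ => deriv χ τ ^ 2) (by fun_prop)
    (hasCompactSupport_sq hχc.deriv) (q := fun τ => 2 * s * χ τ * deriv χ τ) (by fun_prop)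
    hχc.deriv.mul_left).congr' ?_
  filter_upwards [eventually_gt_atTop 0] with N hN
  have hscale := Measure.integral_comp_div
    (fun τ => B (N * τ) * (deriv χ τ ^ 2 / N - 2 * s * χ τ * deriv χ τ)) N
  rw [abs_of_pos hN, smul_eq_mul] at hscale
  rw [← mul_right_inj' hN.ne', ← hscale, ← integral_const_mul]
  congr 1 with t
  rw [deriv_comp_div hχ.differentiable_one, mul_div_cancel₀ _ hN.ne']
  field_simp

lemma integral_mul_sq_comp_div_mono (hE : Continuous E) (hE0 : ∀ t, 0 ≤ E t)
    (b : ContDiffBump (0 : ℝ)) {M N : ℝ} (hM : 0 < M) (hMN : b.rOut * M ≤ b.rIn * N) :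
    ∫ t, E t * b (t / M) ^ 2 ≤ ∫ t, E t * b (t / N) ^ 2 := by
  have hN : 0 < N := pos_of_mul_pos_right ((mul_pos b.rOut_pos hM).trans_le hMN) b.rIn_pos.le
  have hint {K : ℝ} (hK : K ≠ 0) : Integrable fun t => E t * b (t / K) ^ 2 :=
    Continuous.integrable_of_hasCompactSupport
      (hE.mul ((b.continuous.comp (continuous_id.div_const K)).pow 2))
      (hasCompactSupport_sq (hasCompactSupport_comp_div b.hasCompactSupport hK)).mul_left
  refine integral_mono (hint hM.ne') (hint hN.ne') fun t => mul_le_mul_of_nonneg_left ?_ (hE0 t)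
  refine pow_le_pow_left₀ b.nonneg ?_ 2
  obtain ht | ht := lt_or_ge |t| (b.rOut * M)
  · have htN : t / N ∈ closedBall 0 b.rIn := by
      rw [mem_closedBall_zero_iff, norm_eq_abs, abs_div, abs_of_pos hN, div_le_iff₀ hN]
      exact ht.le.trans hMN
    rw [b.one_of_mem_closedBall htN]
    exact b.le_one
  · have htM : b.rOut ≤ dist (t / M) 0 := by
      rwa [dist_zero_right, norm_eq_abs, abs_div, abs_of_pos hM, le_div_iff₀ hM]
    rw [b.zero_of_le_dist htM]
    exact b.nonneg

lemma integral_mul_sq_comp_div_pos (hE : Continuous E) (hE0 : ∀ t, 0 ≤ E t)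
    (b : ContDiffBump (0 : ℝ)) {M t₀ : ℝ} (hM : 0 < M) (ht₀ : |t₀| ≤ b.rIn * M)
    (hEt₀ : E t₀ ≠ 0) : 0 < ∫ t, E t * b (t / M) ^ 2 := by
  have hbt₀ : b (t₀ / M) = 1 := b.one_of_mem_closedBall <| by
    rwa [mem_closedBall_zero_iff, norm_eq_abs, abs_div, abs_of_pos hM, div_le_iff₀ hM]
  exact Continuous.integral_pos_of_hasCompactSupport_nonneg_nonzero
    (hE.mul ((b.continuous.comp (continuous_id.div_const M)).pow 2))
    (hasCompactSupport_sq (hasCompactSupport_comp_div b.hasCompactSupport hM.ne')).mul_left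
    (fun t => mul_nonneg (hE0 t) (sq_nonneg _)) (x := t₀) (by simpa [hbt₀] using hEt₀)

lemma eq_zero_of_forall_integral_nonneg (hB : Continuous B)
    (hB0 : Tendsto B (cocompact ℝ) (𝓝 0)) (hE : Continuous E) (hE0 : ∀ t, 0 ≤ E t)
    (hBE : ∀ ψ : ℝ → ℝ, ContDiff ℝ 1 ψ → HasCompactSupport ψ →
      0 ≤ ∫ t, (B t * (deriv ψ t ^ 2 - 2 * s * ψ t * deriv ψ t) - E t * ψ t ^ 2)) :
    E = 0 := by
  let χ : ContDiffBump (0 : ℝ) := ⟨1, 2, one_pos, one_lt_two⟩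
  have hχ : ContDiff ℝ 1 χ := χ.contDiff
  have hcut (N : ℝ) (hN : N ≠ 0) : ∫ t, E t * χ (t / N) ^ 2 ≤
      ∫ t, B t * (deriv (fun t => χ (t / N)) t ^ 2 -
        2 * s * χ (t / N) * deriv (fun t => χ (t / N)) t) := by
    have hψ : ContDiff ℝ 1 fun t => χ (t / N) := hχ.comp (contDiff_id.div_const N)
    have hψc := hasCompactSupport_comp_div χ.hasCompactSupport hN
    have := hψ.continuous_deriv_one
    have := hψ.continuous
    have hnonneg := hBE _ hψ hψc
    rwa [integral_sub, sub_nonneg] at hnonneg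
    · refine Continuous.integrable_of_hasCompactSupport (by fun_prop) ?_
      exact ((hasCompactSupport_sq hψc.deriv).sub hψc.deriv.mul_left).mul_left
    · exact Continuous.integrable_of_hasCompactSupport (by fun_prop)
        (hasCompactSupport_sq hψc).mul_left
  by_contra hne
  obtain ⟨t₀, ht₀⟩ := Function.ne_iff.1 hne
  let M := |t₀| + 1
  have hM : 0 < M := by positivity
  have hpos : 0 < ∫ t, E t * χ (t / M) ^ 2 :=
    integral_mul_sq_comp_div_pos hE hE0 χ hM (by simp [χ, M]) ht₀
  refine hpos.not_ge
    (ge_of_tendsto (tendsto_integral_cutoff (s := s) hB hB0 hχ χ.hasCompactSupport) ?_)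
  filter_upwards [eventually_ge_atTop (2 * M)] with N hN
  exact (integral_mul_sq_comp_div_mono hE hE0 χ hM (by simpa [χ] using hN)).trans
    (hcut N ((mul_pos two_pos hM).trans_le hN).ne')

end Cutoff

lemma integral_hardy_nonneg_of_weak_of_stable {d s : ℝ} (hs : s ^ 2 = d - 1) {f U ψ : ℝ → ℝ}
    (hf : ContDiff ℝ 1 f) (hU : ContDiff ℝ 2 U)
    (hweak : IsLogWeakSolution d f U) (hstab : IsLogStable d f U)
    (hψ : ContDiff ℝ 1 ψ) (hψc : HasCompactSupport ψ) :
    0 ≤ ∫ t, (exp ((d - 2 - 2 * s) * t) * (radialSlope U t ^ 2 * fluxDeriv (radialSlope U t)) *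
        (deriv ψ t ^ 2 - 2 * s * ψ t * deriv ψ t) -
      (d - 1) * (exp ((d - 2 - 2 * s) * t) *
        (radialSlope U t ^ 4 * fluxDeriv (radialSlope U t))) * ψ t ^ 2) := by
  convert integral_nonneg_of_weak_of_stable hf hU hweak hstab
    ((contDiff_exp_mul (-s)).mul hψ) (hψc.mul_left (f := fun t => exp (-s * t))) using 3 with t
  have hexp : exp ((d - 2 - 2 * s) * t) = exp ((d - 2) * t) * exp (-s * t) ^ 2 := by
    rw [← exp_nat_mul, ← exp_add]
    push_cast
    ring_nf
  rw [deriv_exp_mul_mul _ (hψ.differentiable_one t), ← mul_flux_sub_sq_mul_fluxDeriv, ← hs, hexp]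
  ring

lemma radialSlope_eq_zero_of_weak_of_stable {d s : ℝ} (hd : 1 < d) (hs : s ^ 2 = d - 1)
    {f U : ℝ → ℝ} (hf : ContDiff ℝ 1 f) (hU : ContDiff ℝ 2 U)
    (hweak : IsLogWeakSolution d f U) (hstab : IsLogStable d f U)
    (hlim : Tendsto (fun t => exp ((d - 2 - 2 * s) * t) *
      (radialSlope U t ^ 2 * fluxDeriv (radialSlope U t))) (cocompact ℝ) (𝓝 0)) :
    radialSlope U = 0 := by
  have hd' : 0 < d - 1 := sub_pos.2 hd
  have hV := (contDiff_radialSlope hU).continuous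
  have hκ := continuous_fluxDeriv.comp hV
  have hexp : Continuous fun t => exp ((d - 2 - 2 * s) * t) := by fun_prop
  have hE : (fun t => (d - 1) * (exp ((d - 2 - 2 * s) * t) *
      (radialSlope U t ^ 4 * fluxDeriv (radialSlope U t)))) = 0 :=
    eq_zero_of_forall_integral_nonneg (hexp.mul ((hV.pow 2).mul hκ)) hlim
      (continuous_const.mul (hexp.mul ((hV.pow 4).mul hκ)))
      (fun t => by have := fluxDeriv_pos (radialSlope U t); positivity)
      fun ψ hψ hψc => integral_hardy_nonneg_of_weak_of_stable hs hf hU hweak hstab hψ hψc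
  funext t
  simpa [hd'.ne', (exp_pos _).ne', (fluxDeriv_pos _).ne'] using congr_fun hE t

section BoundaryTerm

variable {V : ℝ → ℝ} {α : ℝ} {l : Filter ℝ}

lemma tendsto_exp_mul_sq_mul_fluxDeriv_of_isLittleO
    (hV : V =o[l] fun t => exp (-(α / 2) * t)) :
    Tendsto (fun t => exp (α * t) * (V t ^ 2 * fluxDeriv (V t))) l (𝓝 0) := by
  have hsq : (fun t => exp (α * t) * V t ^ 2) =o[l] fun _ => (1 : ℝ) := by
    refine ((isBigO_refl _ l).mul_isLittleO (hV.pow two_pos)).congr_right fun t => ?_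
    rw [← exp_nat_mul, ← exp_add, ← exp_zero]
    push_cast
    ring_nf
  refine squeeze_zero (fun t => ?_) (fun t => ?_) ((isLittleO_one_iff ℝ).1 hsq)
  · have := fluxDeriv_pos (V t)
    positivity
  · gcongr
    exact sq_mul_fluxDeriv_le_sq (V t)

lemma tendsto_exp_mul_sq_mul_fluxDeriv_of_inv_isLittleO
    (hV : (fun t => |V t|⁻¹) =o[l] fun t => exp (-α * t)) :
    Tendsto (fun t => exp (α * t) * (V t ^ 2 * fluxDeriv (V t))) l (𝓝 0) := by
  have hinv : (fun t => exp (α * t) * |V t|⁻¹) =o[l] fun _ => (1 : ℝ) := by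
    refine ((isBigO_refl _ l).mul_isLittleO hV).congr_right fun t => ?_
    rw [← exp_add, ← exp_zero]
    ring_nf
  refine squeeze_zero (fun t => ?_) (fun t => ?_) ((isLittleO_one_iff ℝ).1 hinv)
  · have := fluxDeriv_pos (V t)
    positivity
  · gcongr
    exact sq_mul_fluxDeriv_le_inv_abs (V t)

lemma tendsto_exp_mul_sq_mul_fluxDeriv_atBot (hα : -2 < α) (hV : V =O[atBot] exp) :
    Tendsto (fun t => exp (α * t) * (V t ^ 2 * fluxDeriv (V t))) atBot (𝓝 0) := by
  refine tendsto_exp_mul_sq_mul_fluxDeriv_of_isLittleO (hV.trans_isLittleO ?_)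
  refine isLittleO_exp_comp_exp_comp.2 ?_
  have hlin : (fun t : ℝ => -(α / 2) * t - t) = fun t => -(α / 2 + 1) * t := by
    funext t; ring
  rw [hlin]
  exact tendsto_id.const_mul_atBot_of_neg (by linarith)

end BoundaryTerm

lemma fderiv_zero_of_even {E F : Type*} [NormedAddCommGroup E] [NormedSpace ℝ E]
    [NormedAddCommGroup F] [NormedSpace ℝ F] {u : E → F} (hu : ∀ x, u (-x) = u x) :
    fderiv ℝ u 0 = 0 := by
  have hneg := (ContinuousLinearEquiv.neg ℝ).comp_right_fderiv (f := u) (x := 0)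
  have hcomp : u ∘ ContinuousLinearEquiv.neg ℝ = u := funext hu
  rw [hcomp, map_zero] at hneg
  have : IsAddTorsionFree F := .of_isTorsionFree ℝ F
  ext v
  have hv : fderiv ℝ u 0 v = -fderiv ℝ u 0 v := by
    simpa using DFunLike.congr_fun hneg v
  exact self_eq_neg.1 hv

section Radial

variable {E : Type*} [NormedAddCommGroup E] [InnerProductSpace ℝ E] {u : E → ℝ} {g U : ℝ → ℝ}
  {e : E}

lemma norm_exp_smul (he : ‖e‖ = 1) (t : ℝ) : ‖exp t • e‖ = exp t := by
  rw [norm_smul, he, mul_one, norm_eq_abs, abs_exp]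

lemma hasLogProfile_of_radial (hu : ∀ x, u x = g ‖x‖) (he : ‖e‖ = 1) :
    HasLogProfile u fun t => u (exp t • e) := by
  intro x hx
  change u x = u (exp (log ‖x‖) • e)
  rw [hu, hu (exp _ • e), norm_exp_smul he, exp_log (norm_pos_iff.2 hx)]

lemma isLittleO_comp_exp_smul {F : E → ℝ} {p : ℝ} (hF : F =o[cobounded E] fun x => ‖x‖ ^ p)
    (he : ‖e‖ = 1) : (fun t => F (exp t • e)) =o[atTop] fun t => exp (p * t) := by
  have hray : Tendsto (fun t => exp t • e) atTop (cobounded E) := by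
    rw [← tendsto_norm_atTop_iff_cobounded]
    simpa only [norm_exp_smul he] using tendsto_exp_atTop
  refine (hF.comp_tendsto hray).congr_right fun t => ?_
  rw [Function.comp_apply, norm_exp_smul he, ← exp_mul, mul_comm]

variable [CompleteSpace E]

lemma HasLogProfile.norm_gradient_exp_smul (hu : HasLogProfile u U) (hU : Differentiable ℝ U)
    (he : ‖e‖ = 1) (t : ℝ) : ‖gradient u (exp t • e)‖ = |radialSlope U t| := by
  have he0 : exp t • e ≠ 0 := norm_ne_zero_iff.1 (by rw [norm_exp_smul he]; positivity)
  simpa only [norm_exp_smul he, log_exp] using hu.norm_gradient hU _ he0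

lemma HasLogProfile.tendsto_exp_mul_sq_mul_fluxDeriv_atTop (hu : HasLogProfile u U)
    (hU : Differentiable ℝ U) (he : ‖e‖ = 1) {α : ℝ}
    (hgrowth : (fun x => ‖gradient u x‖) =o[cobounded E] (fun x => ‖x‖ ^ (-(α / 2))) ∨
      (fun x => ‖gradient u x‖⁻¹) =o[cobounded E] fun x => ‖x‖ ^ (-α)) :
    Tendsto (fun t => exp (α * t) * (radialSlope U t ^ 2 * fluxDeriv (radialSlope U t))) atTop
      (𝓝 0) := by
  obtain hlow | hhigh := hgrowth
  · refine tendsto_exp_mul_sq_mul_fluxDeriv_of_isLittleO (IsLittleO.of_norm_left ?_)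
    simpa only [norm_eq_abs, hu.norm_gradient_exp_smul hU he] using isLittleO_comp_exp_smul hlow he
  · refine tendsto_exp_mul_sq_mul_fluxDeriv_of_inv_isLittleO ?_
    simpa only [hu.norm_gradient_exp_smul hU he] using isLittleO_comp_exp_smul hhigh he

lemma HasLogProfile.radialSlope_isBigO_exp (hu : HasLogProfile u U) (hU : Differentiable ℝ U)
    (he : ‖e‖ = 1) (hdiff : DifferentiableAt ℝ (fderiv ℝ u) 0) (hzero : fderiv ℝ u 0 = 0) :
    radialSlope U =O[atBot] exp := by
  have hray : Tendsto (fun t => exp t • e) atBot (𝓝 0) := by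
    simpa using tendsto_exp_atBot.smul_const e
  refine ((hdiff.isBigO_sub.comp_tendsto hray).norm_norm.congr
    (fun t => ?_) fun t => ?_).of_norm_norm
  · simp [hzero, ← hu.norm_gradient_exp_smul hU he, gradient]
  · simp [norm_exp_smul he]

lemma HasLogProfile.eq_const_of_radialSlope_eq_zero (hu : HasLogProfile u U)
    (hU : Differentiable ℝ U) (hdiff : Differentiable ℝ u) (hzero : fderiv ℝ u 0 = 0)
    (hV : radialSlope U = 0) (x : E) : u x = u 0 := by
  refine is_const_of_fderiv_eq_zero hdiff (fun y => ?_) x 0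
  obtain rfl | hy := eq_or_ne y 0
  · exact hzero
  · have hgrad : gradient u y = 0 := by simp [hu.gradient_eq hU hy, hV]
    simpa [gradient] using hgrad

end Radial

theorem stmt_8_general (n : ℕ) (hn : 3 ≤ n) (f : ℝ → ℝ) (u : Euc n → ℝ) (g : ℝ → ℝ)
    (hf : ContDiff ℝ 1 f)
    (hreg : ContDiff ℝ 2 u)
    (hstable : IsStableSolution (Set.univ : Set (Euc n)) f u)
    (hradial : ∀ x : Euc n, u x = g ‖x‖)
    (hgrowth :
      ((fun x : Euc n => ‖gradient u x‖) =o[cobounded (Euc n)]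
        fun x : Euc n => ‖x‖ ^ (-(n:ℝ)/2 + Real.sqrt ((n:ℝ) - 1) + 1)) ∨
      ((fun x : Euc n => ‖gradient u x‖⁻¹) =o[cobounded (Euc n)]
        fun x : Euc n => ‖x‖ ^ (-(n:ℝ) + 2 * Real.sqrt ((n:ℝ) - 1) + 2))) :
    ∃ c₀ : ℝ, ∀ x : Euc n, u x = c₀ := by
  have : NeZero n := ⟨by omega⟩
  have hn' : (3 : ℝ) ≤ n := by exact_mod_cast hn
  have hs : √((n : ℝ) - 1) ^ 2 = n - 1 := sq_sqrt (by linarith)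
  have hα : -2 < (n : ℝ) - 2 - 2 * √(n - 1) := by
    nlinarith [sq_nonneg (√((n : ℝ) - 1) - 1), sqrt_nonneg ((n : ℝ) - 1)]
  obtain ⟨e, he⟩ := exists_norm_eq (Euc n) zero_le_one
  have hu := hasLogProfile_of_radial hradial he
  have hU : ContDiff ℝ 2 fun t => u (exp t • e) := hreg.comp (contDiff_exp.smul contDiff_const)
  have hUd := hU.differentiable two_ne_zero
  have hzero : fderiv ℝ u 0 = 0 := fderiv_zero_of_even fun x => by simp [hradial]
  have hdiff : Differentiable ℝ (fderiv ℝ u) :=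
    (hreg.fderiv_right (m := 1) one_add_one_eq_two.le).differentiable_one
  have hbot := tendsto_exp_mul_sq_mul_fluxDeriv_atBot hα
    (hu.radialSlope_isBigO_exp hUd he (hdiff 0) hzero)
  have htop := hu.tendsto_exp_mul_sq_mul_fluxDeriv_atTop hUd he (α := n - 2 - 2 * √(n - 1)) <| by
    convert hgrowth using 5 <;> ring
  have hV := radialSlope_eq_zero_of_weak_of_stable (by linarith) hs hf hU
    (hstable.1.isLogWeakSolution hu hUd) (hstable.isLogStable hu hUd)
    (cocompact_eq_atBot_atTop (α := ℝ) ▸ hbot.sup htop)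
  exact ⟨u 0, hu.eq_const_of_radialSlope_eq_zero hUd (hreg.differentiable two_ne_zero) hzero hV⟩

/-- **Theorem (Liouville theorem for radial stable solutions, `n ≥ 7`).**
Let `n ≥ 7`, `f ∈ C¹(ℝ)` and let `u` be a `W^{3,1}_loc(ℝⁿ)` stable solution of
`div(∇u/√(1+|∇u|²)) = -f(u)` in `ℝⁿ`, radially symmetric with respect to the origin.
If either `|∇u(x)| = o(|x|^{-n/2+√(n-1)+1})` or `|∇u(x)|⁻¹ = o(|x|^{-n+2√(n-1)+2})`
as `|x| → ∞`, then `u` is constant. -/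
theorem stmt_8 (n : ℕ) (hn : 7 ≤ n) (f : ℝ → ℝ) (u : Euc n → ℝ) (g : ℝ → ℝ)
    (hf : ContDiff ℝ 1 f)
    (hreg : ContDiff ℝ 3 u)
    (hstable : IsStableSolution (Set.univ : Set (Euc n)) f u)
    (hradial : ∀ x : Euc n, u x = g ‖x‖)
    (hgrowth :
      ((fun x : Euc n => ‖gradient u x‖) =o[cobounded (Euc n)]
        fun x : Euc n => ‖x‖ ^ (-(n:ℝ)/2 + Real.sqrt ((n:ℝ) - 1) + 1)) ∨
      ((fun x : Euc n => ‖gradient u x‖⁻¹) =o[cobounded (Euc n)]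
        fun x : Euc n => ‖x‖ ^ (-(n:ℝ) + 2 * Real.sqrt ((n:ℝ) - 1) + 2))) :
    ∃ c₀ : ℝ, ∀ x : Euc n, u x = c₀ := by
  exact stmt_8_general n (by omega) f u g hf (hreg.of_le (by norm_num)) hstable hradial hgrowth
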